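/- Suppose 1 ≤ S < N, let x₀ ∈ X_S with ‖x₀‖₀ = S, let k ∉ supp(x₀), and set K = {k} ∪ supp(x₀). Consider measurable corrections f : ℝ^N → ℝ satisfying: (odd symmetry) for every l ∈ K, f(y) changes sign when the sign of the coordinate y_l is flipped (all other coordinates fixed); (independence) f(y) = f(y') whenever y_l = y'_l for all l ∈ K; (unbiasedness) the component estimator y ↦ y_k + f(y) is P_x-integrable with ∫ (y_k + f(y)) dP_x(y) = x_k for every x ∈ X_S; and y ↦ y_k + f(y) is square-integrable with respect to P_{x₀}. Then the choice f_c(y) = −y_k · ∏_{l ∈ supp(x₀)} tanh(y_l x₀_l / σ²) satisfies all these constraints and minimizes the MSE at x₀ among all such f: for every admissible f, ∫ (y_k + f_c(y))² dP_{x₀}(y) ≤ ∫ (y_k + f(y))² dP_{x₀}(y). -/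

import Mathlib

open MeasureTheory ProbabilityTheory Filter
open scoped ENNReal Classical

/-- The product Gaussian measure `P_x` on `ℝ^N` with mean `x` and variance `σ²` per coordinate. -/
noncomputable def gaussP (N : ℕ) (σ : ℝ) (x : Fin N → ℝ) : Measure (Fin N → ℝ) :=
  MeasureTheory.Measure.pi fun i => gaussianReal (x i) (Real.toNNReal (σ ^ 2))

/-- The support of `x`: indices with nonzero entries. Its cardinality is `‖x‖₀`. -/
noncomputable def supp {N : ℕ} (x : Fin N → ℝ) : Finset (Fin N) :=
  Finset.univ.filter fun i => x i ≠ 0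

/-- The sparse parameter set `X_S = {x : ‖x‖₀ ≤ S}`. -/
def sparseSet (N S : ℕ) : Set (Fin N → ℝ) := {x | (supp x).card ≤ S}

/-- An estimator is unbiased if each component is `P_x`-integrable with mean `x i`
for every `x ∈ X_S`. -/
def Unbiased (N S : ℕ) (σ : ℝ) (est : (Fin N → ℝ) → Fin N → ℝ) : Prop :=
  ∀ x ∈ sparseSet N S, ∀ i,
    Integrable (fun y => est y i) (gaussP N σ x) ∧
    (∫ y, est y i ∂gaussP N σ x) = x i

/-- The MSE `ε(x; x̂) = ∫ ‖x̂(y) − x‖₂² dP_x(y)`, as an extended real. -/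
noncomputable def MSE (N : ℕ) (σ : ℝ) (est : (Fin N → ℝ) → Fin N → ℝ)
    (x : Fin N → ℝ) : ℝ≥0∞ :=
  ∫⁻ y, ENNReal.ofReal (∑ i, (est y i - x i) ^ 2) ∂gaussP N σ x
/-- Admissible corrections `f` for the component `k ∉ supp(x₀)`: measurable, odd under a
sign flip of any coordinate in `K = {k} ∪ supp(x₀)`, independent of coordinates outside
`K`, with `y ↦ y_k + f(y)` unbiased for the `k`-th component and square-integrable
w.r.t. `P_{x₀}`. -/
def Admissible (N S : ℕ) (σ : ℝ) (x₀ : Fin N → ℝ) (k : Fin N)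
    (f : (Fin N → ℝ) → ℝ) : Prop :=
  Measurable f ∧
  (∀ l ∈ insert k (supp x₀), ∀ y : Fin N → ℝ,
    f (Function.update y l (-(y l))) = - f y) ∧
  (∀ y y' : Fin N → ℝ, (∀ l ∈ insert k (supp x₀), y l = y' l) → f y = f y') ∧
  (∀ x ∈ sparseSet N S,
    Integrable (fun y => y k + f y) (gaussP N σ x) ∧
    (∫ y, (y k + f y) ∂gaussP N σ x) = x k) ∧
  Integrable (fun y => (y k + f y) ^ 2) (gaussP N σ x₀)

/-- The optimal constrained correction `f_c(y) = −y_k ∏_{l ∈ supp(x₀)} tanh(y_l x₀_l/σ²)`. -/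
noncomputable def fc (N : ℕ) (σ : ℝ) (x₀ : Fin N → ℝ) (k : Fin N)
    (y : Fin N → ℝ) : ℝ :=
  - (y k * ∏ l ∈ supp x₀, Real.tanh (y l * x₀ l / σ ^ 2))

/-!
If `x l = 0`, then `P_x` is invariant under the reflection of the `l`-th coordinate, so functions
odd in that coordinate integrate to zero. The set `K` has `S + 1` elements, so every parameter in
`X_S` vanishes somewhere on `K`, and `f_c`, being odd in each coordinate of `K`, has mean zero.
For general `x`, the density of `P_x` with respect to its recentring in the `l`-th coordinate is
proportional to `exp (y_l x_l / σ²)`, and `(1 - tanh u) * exp u = 1 / cosh u` is even. Hence `f` and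
`f * tanh (y_l x_l / σ²)` have the same integral whenever `f` is odd in `y_l`. Applied to `y_k g`
for every `l` in the support of `x₀`, this makes `y_k + f_c` orthogonal in `L²(P_{x₀})` to each `g`
that is odd on that support; taking `g = f - f_c`, the Pythagorean theorem gives optimality.
-/

section Reflection

variable {ι : Type*} [DecidableEq ι] {l : ι}

/-- The reflection of `ℝ^ι` in the hyperplane `y l = 0`. -/
def reflect (l : ι) (y : ι → ℝ) : ι → ℝ := Function.update y l (-(y l))

@[simp]
lemma reflect_same (l : ι) (y : ι → ℝ) : reflect l y l = -(y l) :=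
  Function.update_self ..

lemma reflect_of_ne {i : ι} (h : i ≠ l) (y : ι → ℝ) : reflect l y i = y i :=
  Function.update_of_ne h ..

lemma reflect_involutive (l : ι) : Function.Involutive (reflect l) := fun y => by
  simp [reflect]

/-- A function on `ℝ^ι` is odd in the `l`-th coordinate if it changes sign with `y l`, the other
coordinates being fixed. -/
def OddIn (l : ι) (f : (ι → ℝ) → ℝ) : Prop := ∀ y, f (reflect l y) = -f y

lemma OddIn.mul_even {f g : (ι → ℝ) → ℝ} (hf : OddIn l f) (hg : ∀ y, g (reflect l y) = g y) :
    OddIn l fun y => f y * g y := fun y => by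
  simp only [hf y, hg y, neg_mul]

lemma OddIn.even_mul {f g : (ι → ℝ) → ℝ} (hg : OddIn l g) (hf : ∀ y, f (reflect l y) = f y) :
    OddIn l fun y => f y * g y := fun y => by
  simp only [hf y, hg y, mul_neg]

lemma OddIn.neg {f : (ι → ℝ) → ℝ} (hf : OddIn l f) : OddIn l fun y => -f y := fun y =>
  congrArg Neg.neg (hf y)

lemma OddIn.sub {f g : (ι → ℝ) → ℝ} (hf : OddIn l f) (hg : OddIn l g) :
    OddIn l fun y => f y - g y := fun y => by
  simp only [hf y, hg y, neg_sub_neg, neg_sub]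

variable [Fintype ι]

lemma measurePreserving_reflect (μ : ι → Measure ℝ) [∀ i, SigmaFinite (μ i)] (l : ι)
    [(μ l).IsNegInvariant] :
    MeasurePreserving (reflect l) (Measure.pi μ) (Measure.pi μ) := by
  have hcoord (i : ι) :
      MeasurePreserving (fun t : ℝ => if i = l then -t else t) (μ i) (μ i) := by
    by_cases h : i = l
    · subst h
      simpa using Measure.measurePreserving_neg (μ i)
    · simp only [h, if_false]
      exact MeasurePreserving.id (μ i)
  convert measurePreserving_pi μ μ hcoord using 1
  ext y i
  by_cases h : i = l
  · subst h
    simp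
  · simp [h, reflect_of_ne]

lemma integral_pi_eq_zero_of_oddIn (μ : ι → Measure ℝ) [∀ i, SigmaFinite (μ i)]
    [(μ l).IsNegInvariant] {f : (ι → ℝ) → ℝ} (hf : OddIn l f) :
    ∫ y, f y ∂Measure.pi μ = 0 := by
  have hmp := measurePreserving_reflect μ l
  have hinv := MeasurePreserving.integral_comp'
    (f := MeasurableEquiv.ofInvolutive _ (reflect_involutive l) hmp.measurable) hmp f
  simp only [MeasurableEquiv.ofInvolutive_apply, hf _, integral_neg] at hinv
  linarith

end Reflection

section ChangeOfMeasure

lemma pi_update_withDensity {ι : Type*} [Fintype ι] [DecidableEq ι] {X : ι → Type*}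
    [∀ i, MeasurableSpace (X i)] (μ : ∀ i, Measure (X i)) [∀ i, SigmaFinite (μ i)] (l : ι)
    {w : X l → ℝ≥0∞} (hw : Measurable w) [SigmaFinite ((μ l).withDensity w)] :
    Measure.pi (Function.update μ l ((μ l).withDensity w)) =
      (Measure.pi μ).withDensity fun y => w (y l) := by
  have (i : ι) : SigmaFinite (Function.update μ l ((μ l).withDensity w) i) := by
    by_cases h : i = l
    · subst h
      rwa [Function.update_self]
    · rw [Function.update_of_ne h]
      infer_instance
  refine Measure.pi_eq fun s hs => ?_
  rw [withDensity_apply _ (.univ_pi hs), Measure.restrict_pi_pi,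
    ← lintegral_map hw (measurable_pi_apply l), Measure.pi_map_eval, lintegral_smul_measure,
    ← Finset.mul_prod_erase _ _ (Finset.mem_univ l), Function.update_self,
    withDensity_apply _ (hs l), smul_eq_mul, mul_comm]
  congr 1
  refine Finset.prod_congr rfl fun i hi => ?_
  rw [Function.update_of_ne (Finset.ne_of_mem_erase hi), Measure.restrict_apply_univ]

lemma gaussianReal_eq_withDensity_gaussianReal_zero (m : ℝ) {v : NNReal} (hv : v ≠ 0) :
    gaussianReal m v = (gaussianReal 0 v).withDensity
      fun t => ENNReal.ofReal (Real.exp (t * m / v - m ^ 2 / (2 * v))) := by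
  rw [gaussianReal_of_var_ne_zero m hv, gaussianReal_of_var_ne_zero 0 hv,
    ← withDensity_mul _ (measurable_gaussianPDF 0 v) (by fun_prop)]
  congr 1
  ext t
  have hv' : (v : ℝ) ≠ 0 := by exact_mod_cast hv
  have hexp : -(t - m) ^ 2 / (2 * v) = -(t - 0) ^ 2 / (2 * v) + (t * m / v - m ^ 2 / (2 * v)) := by
    field_simp
    ring
  rw [Pi.mul_apply, gaussianPDF, gaussianPDF, ← ENNReal.ofReal_mul (gaussianPDFReal_nonneg ..),
    gaussianPDFReal, gaussianPDFReal, hexp, Real.exp_add, ← mul_assoc]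

instance isNegInvariant_gaussianReal_zero (v : NNReal) : (gaussianReal 0 v).IsNegInvariant :=
  ⟨gaussianReal_map_neg.trans (by rw [neg_zero])⟩

end ChangeOfMeasure

lemma one_sub_tanh_mul_exp (u : ℝ) : (1 - Real.tanh u) * Real.exp u = (Real.cosh u)⁻¹ := by
  have hcosh := (Real.cosh_pos u).ne'
  have hexp : Real.exp (-u) * Real.exp u = 1 := by rw [← Real.exp_add]; simp
  rw [Real.tanh_eq_sinh_div_cosh]
  field_simp
  rw [Real.cosh_sub_sinh, hexp]

@[fun_prop]
lemma measurable_tanh : Measurable Real.tanh := by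
  rw [funext Real.tanh_eq_sinh_div_cosh]
  exact Real.measurable_sinh.div Real.measurable_cosh

section TanhProd

variable {ι : Type*} (v : ℝ) (x : ι → ℝ) (A : Finset ι)

/-- The product of `tanh (y l * x l / v)` over `l ∈ A`. If `y` has independent `N(x l, v)`
coordinates and `f` is odd in each coordinate of `A`, then `f y * tanhProd v x A y` is the
conditional mean of `f y` given `|y l|` for `l ∈ A` and the coordinates outside `A`. -/
noncomputable def tanhProd (y : ι → ℝ) : ℝ := ∏ l ∈ A, Real.tanh (y l * x l / v)

lemma abs_tanhProd_le_one (y : ι → ℝ) : |tanhProd v x A y| ≤ 1 := by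
  rw [tanhProd, Finset.abs_prod]
  exact Finset.prod_le_one (fun _ _ => abs_nonneg _) fun _ _ => (Real.abs_tanh_lt_one _).le

@[fun_prop]
lemma measurable_tanhProd : Measurable (tanhProd v x A) := by
  unfold tanhProd
  fun_prop

lemma integrable_mul_tanhProd {μ : Measure (ι → ℝ)} {f : (ι → ℝ) → ℝ} (hf : Integrable f μ) :
    Integrable (fun y => f y * tanhProd v x A y) μ :=
  hf.mul_bdd (measurable_tanhProd v x A).aestronglyMeasurable
    (.of_forall (abs_tanhProd_le_one v x A))

variable {A} [DecidableEq ι] {l : ι}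

lemma tanhProd_reflect_of_notMem (hl : l ∉ A) (y : ι → ℝ) :
    tanhProd v x A (reflect l y) = tanhProd v x A y :=
  Finset.prod_congr rfl fun i hi => by rw [reflect_of_ne (ne_of_mem_of_not_mem hi hl)]

lemma oddIn_tanhProd (hl : l ∈ A) : OddIn l (tanhProd v x A) := fun y => by
  have hrest := tanhProd_reflect_of_notMem v x (Finset.notMem_erase l A) y
  unfold tanhProd at hrest ⊢
  rw [← Finset.mul_prod_erase A _ hl, ← Finset.mul_prod_erase A _ hl, hrest, reflect_same,
    neg_mul, neg_div, Real.tanh_neg, neg_mul]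

end TanhProd

section GaussianModel

variable {N : ℕ} {σ : ℝ} {x : Fin N → ℝ} {l : Fin N} {f : (Fin N → ℝ) → ℝ}

instance isProbabilityMeasure_gaussP (N : ℕ) (σ : ℝ) (x : Fin N → ℝ) :
    IsProbabilityMeasure (gaussP N σ x) := by
  unfold gaussP
  infer_instance

lemma memLp_eval_gaussP (σ : ℝ) (x : Fin N → ℝ) (k : Fin N) {p : ℝ≥0∞} (hp : p ≠ ∞) :
    MemLp (fun y => y k) p (gaussP N σ x) :=
  (memLp_id_gaussianReal' p hp).comp_measurePreserving
    (measurePreserving_eval (fun i => gaussianReal (x i) (Real.toNNReal (σ ^ 2))) k)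

lemma integral_eval_gaussP (σ : ℝ) (x : Fin N → ℝ) (k : Fin N) :
    ∫ y, y k ∂gaussP N σ x = x k := by
  let μ i := gaussianReal (x i) (Real.toNNReal (σ ^ 2))
  calc ∫ y, y k ∂gaussP N σ x = ∫ t, t ∂μ k :=
        integral_comp_eval (μ := μ) measurable_id.aestronglyMeasurable
    _ = x k := integral_id_gaussianReal

lemma integral_gaussP_eq_zero_of_oddIn (hx : x l = 0) (hf : OddIn l f) :
    ∫ y, f y ∂gaussP N σ x = 0 := by
  have : (gaussianReal (x l) (Real.toNNReal (σ ^ 2))).IsNegInvariant := by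
    rw [hx]
    infer_instance
  exact integral_pi_eq_zero_of_oddIn _ hf

lemma gaussP_eq_withDensity_gaussP_update_zero (hσ : σ ≠ 0) (x : Fin N → ℝ) (l : Fin N) :
    gaussP N σ x = (gaussP N σ (Function.update x l 0)).withDensity fun y =>
      ENNReal.ofReal (Real.exp (y l * x l / σ ^ 2 - x l ^ 2 / (2 * σ ^ 2))) := by
  set v := Real.toNNReal (σ ^ 2) with hv
  have hv_coe : (v : ℝ) = σ ^ 2 := Real.coe_toNNReal _ (sq_nonneg σ)
  have hv0 : v ≠ 0 := by
    rw [← NNReal.coe_ne_zero, hv_coe]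
    positivity
  let ν i := gaussianReal (Function.update x l 0 i) v
  have hνl : gaussianReal (x l) v = (ν l).withDensity fun t =>
      ENNReal.ofReal (Real.exp (t * x l / σ ^ 2 - x l ^ 2 / (2 * σ ^ 2))) := by
    simp only [ν, Function.update_self, ← hv_coe]
    exact gaussianReal_eq_withDensity_gaussianReal_zero (x l) hv0
  have hupdate : (fun i => gaussianReal (x i) v) =
      Function.update ν l (gaussianReal (x l) v) := by
    ext1 i
    by_cases h : i = l
    · subst h
      simp
    · simp [ν, h]
  have : SigmaFinite ((ν l).withDensity fun t =>
      ENNReal.ofReal (Real.exp (t * x l / σ ^ 2 - x l ^ 2 / (2 * σ ^ 2)))) := by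
    rw [← hνl]
    infer_instance
  rw [gaussP, ← hv, hupdate, hνl]
  exact pi_update_withDensity ν l (by fun_prop)

lemma integral_mul_one_sub_tanh_gaussP (hσ : σ ≠ 0) (hf : OddIn l f) :
    ∫ y, f y * (1 - Real.tanh (y l * x l / σ ^ 2)) ∂gaussP N σ x = 0 := by
  rw [gaussP_eq_withDensity_gaussP_update_zero hσ x l,
    integral_withDensity_eq_integral_toReal_smul (by fun_prop) (by simp)]
  have hintegrand (y : Fin N → ℝ) :
      (ENNReal.ofReal (Real.exp (y l * x l / σ ^ 2 - x l ^ 2 / (2 * σ ^ 2)))).toReal •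
        (f y * (1 - Real.tanh (y l * x l / σ ^ 2))) =
      f y * ((Real.cosh (y l * x l / σ ^ 2))⁻¹ * Real.exp (-(x l ^ 2 / (2 * σ ^ 2)))) := by
    rw [ENNReal.toReal_ofReal (Real.exp_nonneg _), smul_eq_mul, ← one_sub_tanh_mul_exp,
      sub_eq_add_neg, Real.exp_add]
    ring
  simp_rw [hintegrand]
  refine integral_gaussP_eq_zero_of_oddIn (Function.update_self ..) (hf.mul_even fun y => ?_)
  rw [reflect_same, neg_mul, neg_div, Real.cosh_neg]

lemma integral_mul_tanh_gaussP (hσ : σ ≠ 0) (hint : Integrable f (gaussP N σ x))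
    (hf : OddIn l f) :
    ∫ y, f y * Real.tanh (y l * x l / σ ^ 2) ∂gaussP N σ x = ∫ y, f y ∂gaussP N σ x := by
  have hint_tanh : Integrable (fun y => f y * Real.tanh (y l * x l / σ ^ 2)) (gaussP N σ x) := by
    simpa [tanhProd] using integrable_mul_tanhProd (σ ^ 2) x {l} hint
  have hzero := integral_mul_one_sub_tanh_gaussP (x := x) hσ hf
  simp only [mul_sub, mul_one] at hzero
  rw [integral_sub hint hint_tanh] at hzero
  linarith

lemma integral_mul_tanhProd_gaussP (hσ : σ ≠ 0) (hint : Integrable f (gaussP N σ x))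
    {A : Finset (Fin N)} (hf : ∀ l ∈ A, OddIn l f) :
    ∫ y, f y * tanhProd (σ ^ 2) x A y ∂gaussP N σ x = ∫ y, f y ∂gaussP N σ x := by
  induction A using Finset.induction_on with
  | empty => simp [tanhProd]
  | insert a A ha ih =>
    have hodd : OddIn a fun y => f y * tanhProd (σ ^ 2) x A y :=
      (hf a (Finset.mem_insert_self a A)).mul_even (tanhProd_reflect_of_notMem _ x ha)
    calc ∫ y, f y * tanhProd (σ ^ 2) x (insert a A) y ∂gaussP N σ x
        = ∫ y, f y * tanhProd (σ ^ 2) x A y * Real.tanh (y a * x a / σ ^ 2) ∂gaussP N σ x := by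
          congr with y
          rw [tanhProd, Finset.prod_insert ha, tanhProd]
          ring
      _ = ∫ y, f y * tanhProd (σ ^ 2) x A y ∂gaussP N σ x :=
          integral_mul_tanh_gaussP hσ (integrable_mul_tanhProd _ x A hint) hodd
      _ = ∫ y, f y ∂gaussP N σ x := ih fun l hl => hf l (Finset.mem_insert_of_mem hl)

end GaussianModel

lemma integral_sq_le_integral_add_sq {α : Type*} [MeasurableSpace α] {μ : Measure α}
    {u w : α → ℝ} (hu : MemLp u 2 μ) (hw : MemLp w 2 μ) (h : ∫ a, u a * w a ∂μ = 0) :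
    ∫ a, u a ^ 2 ∂μ ≤ ∫ a, (u a + w a) ^ 2 ∂μ := by
  have hsum : Integrable (fun a => u a ^ 2 + w a ^ 2) μ := hu.integrable_sq.add hw.integrable_sq
  have hcross : Integrable (fun a => 2 * (u a * w a)) μ := (hu.integrable_mul hw).const_mul 2
  have hpythagoras : ∫ a, (u a + w a) ^ 2 ∂μ = ∫ a, u a ^ 2 ∂μ + ∫ a, w a ^ 2 ∂μ := by
    calc ∫ a, (u a + w a) ^ 2 ∂μ
        = ∫ a, (u a ^ 2 + w a ^ 2 + 2 * (u a * w a)) ∂μ := by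
          congr with a
          ring
      _ = ∫ a, u a ^ 2 ∂μ + ∫ a, w a ^ 2 ∂μ := by
          rw [integral_add hsum hcross, integral_add hu.integrable_sq hw.integrable_sq,
            integral_const_mul, h, mul_zero, add_zero]
  rw [hpythagoras]
  exact le_add_of_nonneg_right (integral_nonneg fun a => sq_nonneg (w a))

section OptimalCorrection

variable {N S : ℕ} {σ : ℝ} {x₀ : Fin N → ℝ} {k : Fin N}

lemma fc_eq_neg_mul_tanhProd (y : Fin N → ℝ) :
    fc N σ x₀ k y = -(y k * tanhProd (σ ^ 2) x₀ (supp x₀) y) := rfl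

lemma measurable_fc : Measurable (fc N σ x₀ k) := by
  unfold fc
  fun_prop

lemma memLp_fc (x : Fin N → ℝ) {p : ℝ≥0∞} (hp : p ≠ ∞) :
    MemLp (fc N σ x₀ k) p (gaussP N σ x) := by
  refine (memLp_eval_gaussP σ x k hp).mono measurable_fc.aestronglyMeasurable
    (.of_forall fun y => ?_)
  rw [fc_eq_neg_mul_tanhProd, norm_neg, norm_mul]
  exact mul_le_of_le_one_right (norm_nonneg _) (abs_tanhProd_le_one _ x₀ _ y)

lemma oddIn_fc (hk : k ∉ supp x₀) {l : Fin N} (hl : l ∈ insert k (supp x₀)) :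
    OddIn l (fc N σ x₀ k) := by
  rcases Finset.mem_insert.1 hl with rfl | hl
  · have hcoord : OddIn l fun y => y l := reflect_same l
    exact (hcoord.mul_even (tanhProd_reflect_of_notMem _ x₀ hk)).neg
  · have heven := reflect_of_ne (ne_of_mem_of_not_mem hl hk).symm
    exact ((oddIn_tanhProd _ x₀ hl).even_mul heven).neg

lemma fc_congr {y y' : Fin N → ℝ} (h : ∀ l ∈ insert k (supp x₀), y l = y' l) :
    fc N σ x₀ k y = fc N σ x₀ k y' := by
  have hprod : ∏ l ∈ supp x₀, Real.tanh (y l * x₀ l / σ ^ 2) =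
      ∏ l ∈ supp x₀, Real.tanh (y' l * x₀ l / σ ^ 2) :=
    Finset.prod_congr rfl fun l hl => by rw [h l (Finset.mem_insert_of_mem hl)]
  rw [fc, fc, h k (Finset.mem_insert_self _ _), hprod]

lemma exists_mem_eq_zero_of_mem_sparseSet {x : Fin N → ℝ} (hx : x ∈ sparseSet N S)
    {K : Finset (Fin N)} (hK : S < K.card) : ∃ l ∈ K, x l = 0 := by
  obtain ⟨l, hlK, hl⟩ := Finset.exists_mem_notMem_of_card_lt_card (lt_of_le_of_lt hx hK)
  exact ⟨l, hlK, by simpa [supp] using hl⟩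

lemma admissible_fc (hS : S ≤ (supp x₀).card) (hk : k ∉ supp x₀) :
    Admissible N S σ x₀ k (fc N σ x₀ k) := by
  refine ⟨measurable_fc, fun l hl => oddIn_fc hk hl, fun y y' => fc_congr, fun x hx => ?_,
    ((memLp_eval_gaussP σ x₀ k ENNReal.ofNat_ne_top).add
      (memLp_fc x₀ ENNReal.ofNat_ne_top)).integrable_sq⟩
  have hy : Integrable (fun y => y k) (gaussP N σ x) :=
    (memLp_eval_gaussP σ x k ENNReal.one_ne_top).integrable le_rfl
  have hfc : Integrable (fc N σ x₀ k) (gaussP N σ x) :=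
    (memLp_fc x ENNReal.one_ne_top).integrable le_rfl
  have hcard : S < (insert k (supp x₀)).card := by
    rw [Finset.card_insert_of_notMem hk]
    exact Nat.lt_succ_of_le hS
  obtain ⟨l, hl, hxl⟩ := exists_mem_eq_zero_of_mem_sparseSet hx hcard
  refine ⟨hy.add hfc, ?_⟩
  rw [integral_add hy hfc, integral_eval_gaussP,
    integral_gaussP_eq_zero_of_oddIn hxl (oddIn_fc hk hl), add_zero]

lemma integral_add_fc_mul_eq_zero (hσ : σ ≠ 0) (hk : k ∉ supp x₀) {g : (Fin N → ℝ) → ℝ}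
    (hg : MemLp g 2 (gaussP N σ x₀)) (hodd : ∀ l ∈ supp x₀, OddIn l g) :
    ∫ y, (y k + fc N σ x₀ k y) * g y ∂gaussP N σ x₀ = 0 := by
  have hint : Integrable (fun y => y k * g y) (gaussP N σ x₀) :=
    (memLp_eval_gaussP σ x₀ k (p := 2) ENNReal.ofNat_ne_top).integrable_mul hg
  have hmul_odd : ∀ l ∈ supp x₀, OddIn l fun y => y k * g y := fun l hl =>
    (hodd l hl).even_mul (reflect_of_ne (ne_of_mem_of_not_mem hl hk).symm)
  calc ∫ y, (y k + fc N σ x₀ k y) * g y ∂gaussP N σ x₀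
      = ∫ y, (y k * g y - y k * g y * tanhProd (σ ^ 2) x₀ (supp x₀) y) ∂gaussP N σ x₀ := by
        congr with y
        rw [fc_eq_neg_mul_tanhProd]
        ring
    _ = 0 := by
        rw [integral_sub hint (integrable_mul_tanhProd _ x₀ _ hint),
          integral_mul_tanhProd_gaussP hσ hint hmul_odd, sub_self]

lemma integral_add_fc_sq_le (hσ : σ ≠ 0) (hk : k ∉ supp x₀) {f : (Fin N → ℝ) → ℝ}
    (hf : AEStronglyMeasurable f (gaussP N σ x₀)) (hodd : ∀ l ∈ supp x₀, OddIn l f)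
    (hsq : Integrable (fun y => (y k + f y) ^ 2) (gaussP N σ x₀)) :
    ∫ y, (y k + fc N σ x₀ k y) ^ 2 ∂gaussP N σ x₀ ≤
      ∫ y, (y k + f y) ^ 2 ∂gaussP N σ x₀ := by
  have hy : MemLp (fun y => y k) 2 (gaussP N σ x₀) :=
    memLp_eval_gaussP σ x₀ k ENNReal.ofNat_ne_top
  have hfc : MemLp (fc N σ x₀ k) 2 (gaussP N σ x₀) := memLp_fc x₀ ENNReal.ofNat_ne_top
  have hyf : MemLp (fun y => y k + f y) 2 (gaussP N σ x₀) :=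
    (memLp_two_iff_integrable_sq (hy.aestronglyMeasurable.add hf)).2 hsq
  have hf_memLp : MemLp f 2 (gaussP N σ x₀) := by
    simpa [Pi.sub_def] using hyf.sub hy
  have hdiff_odd : ∀ l ∈ supp x₀, OddIn l fun y => f y - fc N σ x₀ k y := fun l hl =>
    (hodd l hl).sub (oddIn_fc hk (Finset.mem_insert_of_mem hl))
  have horthogonal := integral_add_fc_mul_eq_zero hσ hk (hf_memLp.sub hfc) hdiff_odd
  simpa using integral_sq_le_integral_add_sq (hy.add hfc) (hf_memLp.sub hfc) horthogonal

end OptimalCorrection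

theorem stmt_11_general (N S : ℕ) (σ : ℝ) (hσ : σ ≠ 0) (x₀ : Fin N → ℝ)
    (hcard : S ≤ (supp x₀).card) (k : Fin N) (hk : k ∉ supp x₀) :
    Admissible N S σ x₀ k (fc N σ x₀ k) ∧
    ∀ f : (Fin N → ℝ) → ℝ, AEStronglyMeasurable f (gaussP N σ x₀) →
      (∀ l ∈ supp x₀, OddIn l f) →
      Integrable (fun y => (y k + f y) ^ 2) (gaussP N σ x₀) →
      (∫ y, (y k + fc N σ x₀ k y) ^ 2 ∂gaussP N σ x₀)
        ≤ ∫ y, (y k + f y) ^ 2 ∂gaussP N σ x₀ :=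
  ⟨admissible_fc hcard hk, fun _ hf hodd hsq => integral_add_fc_sq_le hσ hk hf hodd hsq⟩

/-- `f_c` is admissible and minimizes the MSE at `x₀` among all admissible corrections. -/
theorem stmt_11 (N S : ℕ) (σ : ℝ) (hσ : 0 < σ) (hS : 1 ≤ S) (hSN : S < N)
    (x₀ : Fin N → ℝ) (hcard : (supp x₀).card = S) (k : Fin N) (hk : k ∉ supp x₀) :
    Admissible N S σ x₀ k (fc N σ x₀ k) ∧
    ∀ f : (Fin N → ℝ) → ℝ, Admissible N S σ x₀ k f →
      (∫ y, (y k + fc N σ x₀ k y) ^ 2 ∂gaussP N σ x₀)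
        ≤ ∫ y, (y k + f y) ^ 2 ∂gaussP N σ x₀ :=
  have ⟨hfc, hmin⟩ := stmt_11_general N S σ hσ.ne' x₀ hcard.ge k hk
  ⟨hfc, fun f ⟨hmeas, hodd, _, _, hsq⟩ => hmin f hmeas.aestronglyMeasurable
    (fun l hl => hodd l (Finset.mem_insert_of_mem hl)) hsq⟩
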